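/- For τ in the upper half-plane and z ∈ ℂ, ϑ₁₁(2τ, 2z) = (η(2τ)/η(τ)²) · ϑ₁₁(τ, z) · ϑ₁₀(τ, z). -/

import Mathlib

open Real Complex Filter Topology

noncomputable section

noncomputable def theta00 (τ z : ℂ) : ℂ :=
  ∑' n : ℤ, Complex.exp (2*(π:ℂ)*Complex.I*(n:ℂ)*z) *
    Complex.exp (2*(π:ℂ)*Complex.I*τ*((n:ℂ)^2/2))

noncomputable def theta01 (τ z : ℂ) : ℂ :=
  ∑' n : ℤ, (-1:ℂ)^n * Complex.exp (2*(π:ℂ)*Complex.I*(n:ℂ)*z) *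
    Complex.exp (2*(π:ℂ)*Complex.I*τ*((n:ℂ)^2/2))

noncomputable def theta10 (τ z : ℂ) : ℂ :=
  ∑' n : ℤ, Complex.exp (2*(π:ℂ)*Complex.I*((n:ℂ)+1/2)*z) *
    Complex.exp (2*(π:ℂ)*Complex.I*τ*((1/2)*((n:ℂ)+1/2)^2))

noncomputable def theta11 (τ z : ℂ) : ℂ :=
  Complex.I * ∑' n : ℤ, (-1:ℂ)^n * Complex.exp (2*(π:ℂ)*Complex.I*((n:ℂ)+1/2)*z) *
    Complex.exp (2*(π:ℂ)*Complex.I*τ*((1/2)*((n:ℂ)+1/2)^2))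

noncomputable def dedekindEta (τ : ℂ) : ℂ :=
  Complex.exp ((π:ℂ)*Complex.I*τ/12) *
    ∏' n : ℕ, (1 - Complex.exp (2*(π:ℂ)*Complex.I*τ*((n:ℂ)+1)))

/-- The finite product `∏_{k=1}^n (1 - q^k) / (1 + q^k)`. -/
def gaussProd (q : ℂ) (n : ℕ) : ℂ :=
  ∏ k ∈ Finset.range n, (1 - q ^ (k + 1)) / (1 + q ^ (k + 1))

/-- The summand in the finite form of the Gauss identity. -/
def gaussTerm (q : ℂ) (n s : ℕ) : ℂ :=
  2 * (-1) ^ s * (gaussProd q n / gaussProd q s) * q ^ (s * (n + 1)) / (1 + q ^ s)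

lemma one_sub_pow_succ_ne_zero {q : ℂ} (hq : ‖q‖ < 1) (n : ℕ) : 1 - q ^ (n + 1) ≠ 0 := by
  intro h
  have h1 : ‖q ^ (n + 1)‖ = 1 := by rw [← sub_eq_zero.mp h, norm_one]
  rw [norm_pow] at h1
  exact (pow_lt_one₀ (norm_nonneg q) hq n.succ_ne_zero).ne h1

lemma one_sub_norm_le_norm_one_add_pow_succ {q : ℂ} (hq : ‖q‖ < 1) (n : ℕ) :
    1 - ‖q‖ ≤ ‖1 + q ^ (n + 1)‖ := by
  have h1 : ‖q ^ (n + 1)‖ ≤ ‖q‖ := by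
    rw [norm_pow]
    exact pow_le_of_le_one (norm_nonneg q) hq.le n.succ_ne_zero
  have h2 := norm_sub_norm_le (1 : ℂ) (-q ^ (n + 1))
  rw [sub_neg_eq_add, norm_neg, norm_one] at h2
  linarith

lemma one_add_pow_succ_ne_zero {q : ℂ} (hq : ‖q‖ < 1) (n : ℕ) : 1 + q ^ (n + 1) ≠ 0 := by
  rw [← norm_pos_iff]
  linarith [one_sub_norm_le_norm_one_add_pow_succ hq n]

lemma gaussProd_ne_zero {q : ℂ} (hq : ‖q‖ < 1) (n : ℕ) : gaussProd q n ≠ 0 :=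
  Finset.prod_ne_zero_iff.mpr fun k _ ↦
    div_ne_zero (one_sub_pow_succ_ne_zero hq k) (one_add_pow_succ_ne_zero hq k)

lemma gaussProd_succ (q : ℂ) (n : ℕ) :
    gaussProd q (n + 1) = gaussProd q n * ((1 - q ^ (n + 1)) / (1 + q ^ (n + 1))) :=
  Finset.prod_range_succ _ _

lemma sum_gaussTerm_sub {q : ℂ} (hq : ‖q‖ < 1) (n m : ℕ) :
    ∑ s ∈ Finset.range (m + 1), (gaussTerm q (n + 1) s - gaussTerm q n s) =
      2 * (-1) ^ (m + 1) * (gaussProd q n / gaussProd q m) * q ^ ((m + 1) * (n + 1)) /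
        (1 + q ^ (n + 1)) := by
  have hn := one_add_pow_succ_ne_zero hq n
  induction m with
  | zero =>
    have h0 : gaussProd q 0 = 1 := Finset.prod_range_zero _
    simp only [zero_add, Finset.sum_range_one, gaussTerm, gaussProd_succ q n, h0]
    field_simp
    ring
  | succ m ih =>
    have hm := one_add_pow_succ_ne_zero hq m
    have hm' := one_sub_pow_succ_ne_zero hq m
    have hP := gaussProd_ne_zero hq m
    rw [Finset.sum_range_succ, ih, gaussTerm, gaussTerm, gaussProd_succ q n, gaussProd_succ q m]
    field_simp
    ring

/-- The finite form, due to Shanks, of the Gauss identity. -/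
lemma sum_gaussTerm {q : ℂ} (hq : ‖q‖ < 1) (n : ℕ) :
    ∑ s ∈ Finset.range (n + 1), gaussTerm q n s =
      (∑ k ∈ Finset.range (n + 1), 2 * (-1) ^ k * q ^ (k ^ 2)) - 1 := by
  induction n with
  | zero => simp [gaussTerm, gaussProd]; norm_num
  | succ n ih =>
    have h := sum_gaussTerm_sub hq n n
    rw [Finset.sum_sub_distrib, ih, sub_eq_iff_eq_add] at h
    rw [Finset.sum_range_succ, h, Finset.sum_range_succ _ (n + 1), gaussTerm,
      div_self (gaussProd_ne_zero hq _), div_self (gaussProd_ne_zero hq _)]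
    have hn := one_add_pow_succ_ne_zero hq n
    field_simp
    ring

lemma tprod_one_sub_pow_succ_ne_zero {q : ℂ} (hq : ‖q‖ < 1) :
    ∏' n : ℕ, (1 - q ^ (n + 1)) ≠ 0 := by
  simp_rw [sub_eq_add_neg]
  refine tprod_one_add_ne_zero_of_summable (fun n ↦ ?_) ?_
  · simpa [← sub_eq_add_neg] using one_sub_pow_succ_ne_zero hq n
  · simpa using (summable_nat_add_iff 1).mpr (summable_geometric_of_lt_one (norm_nonneg _) hq)

lemma norm_sq_lt_one {q : ℂ} (hq : ‖q‖ < 1) : ‖q ^ 2‖ < 1 := by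
  rw [norm_pow]
  exact pow_lt_one₀ (norm_nonneg q) hq two_ne_zero

lemma gaussProd_eq {q : ℂ} (hq : ‖q‖ < 1) (n : ℕ) :
    gaussProd q n = (∏ k ∈ Finset.range n, (1 - q ^ (k + 1))) ^ 2 /
      ∏ k ∈ Finset.range n, (1 - (q ^ 2) ^ (k + 1)) := by
  rw [gaussProd, ← Finset.prod_pow, ← Finset.prod_div_distrib]
  refine Finset.prod_congr rfl fun k _ ↦ ?_
  have h1 := one_add_pow_succ_ne_zero hq k
  have h2 := one_sub_pow_succ_ne_zero hq k
  have h3 : 1 - (q ^ 2) ^ (k + 1) = (1 - q ^ (k + 1)) * (1 + q ^ (k + 1)) := by ring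
  rw [h3]
  field_simp

lemma tendsto_gaussProd {q : ℂ} (hq : ‖q‖ < 1) :
    Tendsto (gaussProd q) atTop
      (𝓝 ((∏' n : ℕ, (1 - q ^ (n + 1))) ^ 2 / ∏' n : ℕ, (1 - (q ^ 2) ^ (n + 1)))) := by
  rw [funext (gaussProd_eq hq)]
  exact ((ModularForm.multipliable_one_sub_pow hq).hasProd.tendsto_prod_nat.pow 2).div
    (ModularForm.multipliable_one_sub_pow (norm_sq_lt_one hq)).hasProd.tendsto_prod_nat
    (tprod_one_sub_pow_succ_ne_zero (norm_sq_lt_one hq))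

lemma exists_norm_gaussTerm_succ_le {q : ℂ} (hq : ‖q‖ < 1) :
    ∃ C, ∀ n s, ‖gaussTerm q n (s + 1)‖ ≤ C * ‖q‖ ^ n := by
  have hP := tendsto_gaussProd hq
  have hP' := hP.inv₀ (div_ne_zero (pow_ne_zero 2 (tprod_one_sub_pow_succ_ne_zero hq))
    (tprod_one_sub_pow_succ_ne_zero (norm_sq_lt_one hq)))
  obtain ⟨A, hA⟩ := hP.norm.bddAbove_range
  obtain ⟨B, hB⟩ := hP'.norm.bddAbove_range
  have hA' n : ‖gaussProd q n‖ ≤ A := hA ⟨n, rfl⟩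
  have hB' n : ‖(gaussProd q n)⁻¹‖ ≤ B := hB ⟨n, rfl⟩
  have hA0 : 0 ≤ A := (norm_nonneg _).trans (hA' 0)
  have hB0 : 0 ≤ B := (norm_nonneg _).trans (hB' 0)
  have hr : 0 < 1 - ‖q‖ := sub_pos.mpr hq
  refine ⟨2 * (A * B) / (1 - ‖q‖), fun n s ↦ ?_⟩
  have hpow : ‖q‖ ^ ((s + 1) * (n + 1)) ≤ ‖q‖ ^ n :=
    pow_le_pow_of_le_one (norm_nonneg q) hq.le (by nlinarith)
  have hden := one_sub_norm_le_norm_one_add_pow_succ hq s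
  rw [gaussTerm, div_eq_mul_inv (gaussProd q n), norm_div, norm_mul, norm_mul, norm_mul, norm_mul,
    norm_pow, norm_pow, norm_neg, norm_one, one_pow, mul_one, Complex.norm_two, div_mul_eq_mul_div]
  have := hA' n
  have := hB' (s + 1)
  gcongr

lemma tendsto_sum_gaussTerm {q : ℂ} (hq : ‖q‖ < 1) :
    Tendsto (fun n ↦ ∑ s ∈ Finset.range (n + 1), gaussTerm q n s) atTop
      (𝓝 ((∏' n : ℕ, (1 - q ^ (n + 1))) ^ 2 / ∏' n : ℕ, (1 - (q ^ 2) ^ (n + 1)))) := by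
  obtain ⟨C, hC⟩ := exists_norm_gaussTerm_succ_le hq
  have htail : Tendsto (fun n ↦ ∑ s ∈ Finset.range n, gaussTerm q n (s + 1)) atTop (𝓝 0) := by
    refine squeeze_zero_norm (a := fun n : ℕ ↦ C * (n * ‖q‖ ^ n)) (fun n ↦ ?_) ?_
    · refine (norm_sum_le_of_le _ fun s _ ↦ hC n s).trans_eq ?_
      rw [Finset.sum_const, Finset.card_range, nsmul_eq_mul]
      ring
    · simpa using (tendsto_self_mul_const_pow_of_lt_one (norm_nonneg q) hq).const_mul C
  have h0 n : gaussTerm q n 0 = gaussProd q n := by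
    simp [gaussTerm, gaussProd]
    ring
  simp_rw [Finset.sum_range_succ', h0]
  simpa using htail.add (tendsto_gaussProd hq)

/-- The Gauss identity `∑ (-1)^n q^(n^2) = ∏ (1 - q^n)^2 / (1 - q^(2n))`. -/
lemma tsum_neg_one_zpow_mul_pow_sq {q : ℂ} (hq : ‖q‖ < 1)
    (hs : Summable fun n : ℤ ↦ (-1 : ℂ) ^ n * q ^ (n.natAbs ^ 2)) :
    ∑' n : ℤ, (-1 : ℂ) ^ n * q ^ (n.natAbs ^ 2) =
      (∏' n : ℕ, (1 - q ^ (n + 1))) ^ 2 / ∏' n : ℕ, (1 - (q ^ 2) ^ (n + 1)) := by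
  have h := (hs.hasSum.nat_add_neg.tendsto_sum_nat.comp (tendsto_add_atTop_nat 1)).sub_const 1
  refine tendsto_nhds_unique (f := fun n ↦ ∑ s ∈ Finset.range (n + 1), gaussTerm q n s) ?_
    (tendsto_sum_gaussTerm hq)
  simp_rw [sum_gaussTerm hq]
  convert h using 2 with n
  · simp only [Function.comp_apply]
    congr 1
    refine Finset.sum_congr rfl fun k _ ↦ ?_
    have hk : (-1 : ℂ) ^ (-k : ℤ) = (-1) ^ k := by
      rw [zpow_neg, zpow_natCast, ← inv_pow, inv_neg_one]
    rw [hk, zpow_natCast, Int.natAbs_neg, Int.natAbs_natCast]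
    ring
  · simp

/-- Rearranging a double sum over `ℤ × ℤ` along `(k, l) ↦ (k + l, k - l)`, when the terms with
`m + n` odd cancel in pairs. -/
lemma tsum_int_prod_eq_of_swap {h : ℤ × ℤ → ℂ} (hs : Summable h)
    (heven : ∀ m n, Even (m + n) → h (n, m) = h (m, n))
    (hodd : ∀ m n, ¬ Even (m + n) → h (n, m) = -h (m, n)) :
    ∑' p, h p = ∑' p : ℤ × ℤ, h (p.1 + p.2, p.1 - p.2) := by
  have hinj : Function.Injective fun p : ℤ × ℤ ↦ (p.1 + p.2, p.1 - p.2) := by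
    rintro ⟨a, b⟩ ⟨c, d⟩ hp
    simp only [Prod.mk.injEq] at hp ⊢
    omega
  have hswap : ∑' p : ℤ × ℤ, h p.swap = ∑' p, h p := (Equiv.prodComm ℤ ℤ).tsum_eq h
  have hsum := hs.tsum_add (hs.comp_injective (Equiv.prodComm ℤ ℤ).injective)
  have hg : ∑' p : ℤ × ℤ, (h p + h p.swap) = 2 * ∑' p, h p := by
    rw [two_mul]
    exact hsum.trans (congrArg _ hswap)
  rw [← hinj.tsum_eq] at hg
  · refine mul_left_cancel₀ (two_ne_zero' ℂ) (hg.symm.trans ?_)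
    rw [← tsum_mul_left]
    refine tsum_congr fun p ↦ ?_
    rw [Prod.swap_prod_mk, heven _ _ ⟨p.1, by ring⟩, two_mul]
  · rintro ⟨m, n⟩ hp
    have he : Even (m + n) := by
      by_contra ho
      exact hp (by simp [hodd m n ho])
    obtain ⟨k, hk⟩ := he
    exact ⟨(k, m - k), by simp only [Prod.mk.injEq]; omega⟩

lemma norm_neg_one_zpow (n : ℤ) : ‖(-1 : ℂ) ^ n‖ = 1 := by simp

lemma summable_norm_theta10_term (τ z : ℂ) (hτ : 0 < τ.im) :
    Summable fun n : ℤ ↦ ‖Complex.exp (2*(π:ℂ)*Complex.I*((n:ℂ)+1/2)*z) *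
      Complex.exp (2*(π:ℂ)*Complex.I*τ*((1/2)*((n:ℂ)+1/2)^2))‖ := by
  have h := (((summable_jacobiTheta₂_term_iff (z + τ / 2) τ).mpr hτ).mul_left
    (Complex.exp (π * Complex.I * z + π * Complex.I * τ / 4))).norm
  refine h.congr fun n ↦ ?_
  rw [jacobiTheta₂_term, ← Complex.exp_add, ← Complex.exp_add]
  congr 2
  ring

lemma summable_norm_theta11_term (τ z : ℂ) (hτ : 0 < τ.im) :
    Summable fun n : ℤ ↦ ‖(-1:ℂ)^n * Complex.exp (2*(π:ℂ)*Complex.I*((n:ℂ)+1/2)*z) *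
      Complex.exp (2*(π:ℂ)*Complex.I*τ*((1/2)*((n:ℂ)+1/2)^2))‖ := by
  refine (summable_norm_theta10_term τ z hτ).congr fun n ↦ ?_
  rw [mul_assoc ((-1 : ℂ) ^ n), norm_mul ((-1 : ℂ) ^ n), norm_neg_one_zpow, one_mul]

lemma im_two_mul_pos {τ : ℂ} (hτ : 0 < τ.im) : 0 < (2 * τ).im := by
  simpa using hτ

lemma natCast_natAbs_sq (n : ℤ) : ((n.natAbs ^ 2 : ℕ) : ℂ) = (n : ℂ) ^ 2 := by
  rw [← Int.cast_natCast, Nat.cast_pow, Int.natCast_natAbs, sq_abs, Int.cast_pow]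

lemma summable_norm_neg_one_zpow_mul_pow_sq (τ : ℂ) (hτ : 0 < τ.im) :
    Summable fun n : ℤ ↦
      ‖(-1 : ℂ) ^ n * Complex.exp (2*(π:ℂ)*Complex.I*τ) ^ (n.natAbs ^ 2)‖ := by
  have h := ((summable_jacobiTheta₂_term_iff 0 (2 * τ)).mpr (im_two_mul_pos hτ)).norm
  refine h.congr fun n ↦ ?_
  rw [norm_mul, norm_neg_one_zpow, one_mul, jacobiTheta₂_term, ← Complex.exp_nat_mul]
  congr 2
  rw [natCast_natAbs_sq]
  ring

lemma neg_one_zpow_eq_of_even_add {m n : ℤ} (h : Even (m + n)) :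
    (-1 : ℂ) ^ n = (-1 : ℂ) ^ m := by
  rcases Int.even_or_odd m with hm | hm
  · rw [hm.neg_one_zpow, ((Int.even_add.mp h).mp hm).neg_one_zpow]
  · have hn : Odd n := by
      rw [← Int.not_even_iff_odd] at hm ⊢
      exact fun hn ↦ hm ((Int.even_add.mp h).mpr hn)
    rw [hm.neg_one_zpow, hn.neg_one_zpow]

lemma neg_one_zpow_eq_neg_of_not_even_add {m n : ℤ} (h : ¬ Even (m + n)) :
    (-1 : ℂ) ^ n = -(-1 : ℂ) ^ m := by
  have h' : Even (m + (n + 1)) := by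
    rw [← add_assoc, Int.even_add_one]
    exact h
  rw [← neg_one_zpow_eq_of_even_add h', zpow_add_one₀ (by norm_num)]
  ring

lemma theta11_mul_theta10 (τ z : ℂ) (hτ : 0 < τ.im) :
    theta11 τ z * theta10 τ z = theta11 (2 * τ) (2 * z) *
      ∑' n : ℤ, (-1 : ℂ) ^ n * Complex.exp (2*(π:ℂ)*Complex.I*τ) ^ (n.natAbs ^ 2) := by
  have h11 := summable_norm_theta11_term τ z hτ
  have h10 := summable_norm_theta10_term τ z hτ
  rw [theta11, theta10, theta11, mul_assoc Complex.I, mul_assoc Complex.I]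
  congr 1
  rw [tsum_mul_tsum_of_summable_norm h11 h10, tsum_mul_tsum_of_summable_norm
    (summable_norm_theta11_term (2 * τ) (2 * z) (im_two_mul_pos hτ))
    (summable_norm_neg_one_zpow_mul_pow_sq τ hτ),
    tsum_int_prod_eq_of_swap (summable_mul_of_summable_norm h11 h10)]
  · refine tsum_congr fun ⟨k, l⟩ ↦ ?_
    simp only
    rw [← Complex.exp_nat_mul, natCast_natAbs_sq, zpow_add₀ (by norm_num : (-1 : ℂ) ≠ 0)]
    simp only [mul_assoc, mul_left_comm (Complex.exp _) ((-1 : ℂ) ^ l), ← Complex.exp_add]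
    congr 3
    push_cast
    ring
  · intro m n h
    simp only [neg_one_zpow_eq_of_even_add h]
    ring
  · intro m n h
    simp only [neg_one_zpow_eq_neg_of_not_even_add h]
    ring

lemma dedekindEta_eq (τ : ℂ) :
    dedekindEta τ = Complex.exp ((π:ℂ)*Complex.I*τ/12) *
      ∏' n : ℕ, (1 - Complex.exp (2*(π:ℂ)*Complex.I*τ) ^ (n + 1)) := by
  rw [dedekindEta]
  congr 1
  refine tprod_congr fun n ↦ ?_
  rw [← Complex.exp_nat_mul]
  push_cast
  ring_nf

theorem stmt9 (τ z : ℂ) (hτ : 0 < τ.im) :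
    theta11 (2*τ) (2*z) = (dedekindEta (2*τ) / (dedekindEta τ)^2) * (theta11 τ z * theta10 τ z) := by
  have hq : ‖Complex.exp (2*(π:ℂ)*Complex.I*τ)‖ < 1 :=
    UpperHalfPlane.norm_exp_two_pi_I_lt_one ⟨τ, hτ⟩
  have hq2 : Complex.exp (2*(π:ℂ)*Complex.I*(2*τ)) = Complex.exp (2*(π:ℂ)*Complex.I*τ) ^ 2 := by
    rw [← Complex.exp_nat_mul]
    push_cast
    ring_nf
  have he : Complex.exp ((π:ℂ)*Complex.I*(2*τ)/12) = Complex.exp ((π:ℂ)*Complex.I*τ/12) ^ 2 := by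
    rw [← Complex.exp_nat_mul]
    push_cast
    ring_nf
  have h1 := tprod_one_sub_pow_succ_ne_zero hq
  have h2 := tprod_one_sub_pow_succ_ne_zero (norm_sq_lt_one hq)
  have h3 := Complex.exp_ne_zero ((π:ℂ)*Complex.I*τ/12)
  rw [theta11_mul_theta10 τ z hτ, tsum_neg_one_zpow_mul_pow_sq hq
    (summable_norm_neg_one_zpow_mul_pow_sq τ hτ).of_norm, dedekindEta_eq, dedekindEta_eq, hq2, he]
  generalize ∏' n : ℕ, (1 - Complex.exp (2*(π:ℂ)*Complex.I*τ) ^ (n + 1)) = A at h1 ⊢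
  generalize ∏' n : ℕ, (1 - (Complex.exp (2*(π:ℂ)*Complex.I*τ) ^ 2) ^ (n + 1)) = B at h2 ⊢
  field_simp

end
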